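/- arXiv:2006.01330 — 2 statements merged into one kernel-verified Lean document; each statement's English description precedes it below -/
import Mathlib

section
/- Let A be a commutative ring, let B = A[X] be the polynomial ring in one variable, and suppose that the integral closure of B in Q(B) is contained in Q(A)[X] (this holds, for example, when A is an integral domain). Then B* = (A*)[X]. Consequently, B is strictly closed in its integral closure if and only if A is strictly closed in Ā. -/
open scoped TensorProduct

set_option synthInstance.maxHeartbeats 1000000 in
set_option maxHeartbeats 2000000 in
/-- The strict closure `A*` of `A` in the integral closure `Ā` of `A` in its total ring
of fractions `Q(A)`: the set of `x ∈ Ā` such that `x ⊗ 1 = 1 ⊗ x` in `Ā ⊗_A Ā`. -/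
def strictClosureSet (A : Type*) [CommRing A] : Set (FractionRing A) :=
  {x | ∃ hx : x ∈ integralClosure A (FractionRing A),
    ((⟨x, hx⟩ : integralClosure A (FractionRing A)) ⊗ₜ[A]
        (1 : integralClosure A (FractionRing A)) :
      TensorProduct A (integralClosure A (FractionRing A))
        (integralClosure A (FractionRing A))) =
    (1 : integralClosure A (FractionRing A)) ⊗ₜ[A]
        (⟨x, hx⟩ : integralClosure A (FractionRing A))}

/-- `A` is strictly closed in `Ā`, i.e. `A = A*`. -/
def IsStrictlyClosed (A : Type*) [CommRing A] : Prop :=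
  ∀ x ∈ strictClosureSet A, ∃ a : A, algebraMap A (FractionRing A) a = x

/-!
Call the set of `s ∈ S` with `s ⊗ 1 = 1 ⊗ s` in `S ⊗[R] S` the dominion of `R` in `S`. Since it is
where all pairs of ring homomorphisms out of `S` that agree on `R` agree, the dominion of `R[X]` in
`S[X]` consists of the polynomials with coefficients in the dominion of `R` in `S`: the coefficients
of `P` are recovered from the two maps `S[X] → (S ⊗[R] S)[X]`, and conversely two maps out of `S[X]`
that agree on `R[X]` agree on `X` and on every constant in the dominion of `R`.

The integral closure of `A[X]` in `Q(A)[X]` is `Ā[X]`, and `Q(A)[X]` embeds into `Q(A[X])`. If the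
image of this embedding contains everything integral over `A[X]`, then `Ā[X]` is the integral
closure of `A[X]` in `Q(A[X])`, and the theorem is the computation above for `S = Ā`.
-/

open Polynomial nonZeroDivisors Algebra.TensorProduct

section Dominion

variable {R S R' S' T : Type*} [CommRing R] [CommRing S] [CommRing R'] [CommRing S'] [CommRing T]
  [Algebra R S] [Algebra R' S']

variable (R S) in
/-- The dominion of `R` in `S` in the sense of Isbell, encoded as the set of `s` with
`s ⊗ 1 = 1 ⊗ s`. The strict closure of `R` is its dominion in its integral closure. -/
def dominion : Subalgebra R S :=
  AlgHom.equalizer (includeLeft : S →ₐ[R] S ⊗[R] S) includeRight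

theorem mem_dominion {s : S} : s ∈ dominion R S ↔ s ⊗ₜ[R] (1 : S) = 1 ⊗ₜ[R] s := Iff.rfl

theorem ringHom_apply_eq_of_mem_dominion {f g : S →+* T}
    (hfg : f.comp (algebraMap R S) = g.comp (algebraMap R S)) {s : S} (hs : s ∈ dominion R S) :
    f s = g s := by
  let : Algebra R T := (f.comp (algebraMap R S)).toAlgebra
  let fAlg : S →ₐ[R] T := { f with commutes' := fun _ ↦ rfl }
  let gAlg : S →ₐ[R] T := { g with commutes' := fun r ↦ (RingHom.congr_fun hfg r).symm }
  simpa [fAlg, gAlg] using congrArg (lift fAlg gAlg fun _ _ ↦ Commute.all _ _) (mem_dominion.1 hs)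

theorem map_mem_dominion {f : S →+* S'}
    (hf : ∀ r, f (algebraMap R S r) ∈ (algebraMap R' S').range) {s : S} (hs : s ∈ dominion R S) :
    f s ∈ dominion R' S' := by
  let left : S' →ₐ[R'] S' ⊗[R'] S' := includeLeft
  let right : S' →ₐ[R'] S' ⊗[R'] S' := includeRight
  refine ringHom_apply_eq_of_mem_dominion (f := left.toRingHom.comp f)
    (g := right.toRingHom.comp f) (RingHom.ext fun r ↦ ?_) hs
  obtain ⟨r', hr'⟩ := hf r
  simp only [RingHom.comp_apply, ← hr']
  exact (left.commutes r').trans (right.commutes r').symm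

variable [Algebra R T]

theorem map_dominion_le (f : S →ₐ[R] T) : (dominion R S).map f ≤ dominion R T := by
  rintro _ ⟨s, hs, rfl⟩
  exact map_mem_dominion (f := f.toRingHom) (fun r ↦ ⟨r, (f.commutes r).symm⟩) hs

theorem map_dominion_algEquiv (e : S ≃ₐ[R] T) :
    (dominion R S).map (e : S →ₐ[R] T) = dominion R T := by
  refine le_antisymm (map_dominion_le _) fun s hs ↦ ?_
  exact ⟨e.symm s, map_dominion_le (e.symm : T →ₐ[R] S) ⟨s, hs, rfl⟩, e.apply_symm_apply s⟩

theorem map_val_dominion_range {f : S →ₐ[R] T} (hf : Function.Injective f) :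
    (dominion R f.range).map f.range.val = (dominion R S).map f := by
  rw [← map_dominion_algEquiv (AlgEquiv.ofInjective f hf), Subalgebra.map_map]
  rfl

end Dominion

section StrictClosure

variable {R K L : Type*} [CommRing R] [CommRing K] [CommRing L] [Algebra R K] [Algebra R L]

variable (R K) in
/-- The strict closure of `R` in its integral closure in `K`, as a subalgebra of `K`. The notion
`A*` is the case where `K` is the total ring of fractions of `A`. -/
def strictClosure : Subalgebra R K :=
  (dominion R (integralClosure R K)).map (integralClosure R K).val

theorem strictClosure_eq_map_dominion {f : K →ₐ[R] L} (hf : Function.Injective f)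
    (hrange : f.range = integralClosure R L) : strictClosure R L = (dominion R K).map f := by
  rw [strictClosure, ← hrange, map_val_dominion_range hf]

theorem strictClosure_eq_map_strictClosure {f : K →ₐ[R] L} (hf : Function.Injective f)
    (hrange : integralClosure R L ≤ f.range) :
    strictClosure R L = (strictClosure R K).map f := by
  have hrange_comp : (f.comp (integralClosure R K).val).range = integralClosure R L := by
    refine le_antisymm ?_ fun x hx ↦ ?_
    · rintro _ ⟨y, rfl⟩
      exact y.2.map f
    · obtain ⟨y, rfl⟩ := hrange hx
      exact ⟨⟨y, (isIntegral_algHom_iff f hf).1 hx⟩, rfl⟩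
  have hinj_comp : Function.Injective (f.comp (integralClosure R K).val) :=
    hf.comp Subtype.val_injective
  rw [strictClosure_eq_map_dominion hinj_comp hrange_comp, strictClosure, Subalgebra.map_map]

theorem coe_strictClosure_fractionRing (A : Type*) [CommRing A] :
    (strictClosure A (FractionRing A) : Set (FractionRing A)) = strictClosureSet A := by
  ext x
  constructor
  · rintro ⟨y, hy, rfl⟩
    exact ⟨y.2, hy⟩
  · rintro ⟨hx, hdom⟩
    exact ⟨⟨x, hx⟩, hdom, rfl⟩

theorem isStrictlyClosed_iff_strictClosure_eq_bot (A : Type*) [CommRing A] :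
    IsStrictlyClosed A ↔ strictClosure A (FractionRing A) = ⊥ := by
  rw [IsStrictlyClosed, ← coe_strictClosure_fractionRing, eq_bot_iff]
  rfl

end StrictClosure

section Polynomial

attribute [local instance] Polynomial.algebra

variable {R S K : Type*} [CommRing R] [CommRing S] [CommRing K] [Algebra R S] [Algebra R K]

theorem mem_dominion_polynomial_iff {P : S[X]} :
    P ∈ dominion R[X] S[X] ↔ ∀ i, P.coeff i ∈ dominion R S := by
  refine ⟨fun hP i ↦ ?_, fun hP ↦ ?_⟩
  · let left : S →ₐ[R] S ⊗[R] S := includeLeft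
    let right : S →ₐ[R] S ⊗[R] S := includeRight
    have hagree : (mapRingHom (left : S →+* S ⊗[R] S)).comp (algebraMap R[X] S[X]) =
        (mapRingHom (right : S →+* S ⊗[R] S)).comp (algebraMap R[X] S[X]) := by
      simp only [algebraMap_def, mapRingHom_comp, AlgHom.comp_algebraMap]
    have hmap : P.map (left : S →+* S ⊗[R] S) = P.map (right : S →+* S ⊗[R] S) :=
      ringHom_apply_eq_of_mem_dominion hagree hP
    simpa [left, right, mem_dominion] using congrArg (coeff · i) hmap
  · have hX : X ∈ dominion R[X] S[X] := by
      simpa using (dominion R[X] S[X]).algebraMap_mem (X : R[X])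
    have hC (s : S) (hs : s ∈ dominion R S) : C s ∈ dominion R[X] S[X] :=
      map_mem_dominion (fun r ↦ ⟨C r, map_C _⟩) hs
    rw [P.as_sum_range_C_mul_X_pow]
    exact sum_mem fun i _ ↦ mul_mem (hC _ (hP i)) (pow_mem hX i)

variable (R K) in
theorem range_toAlgHom_polynomial_integralClosure :
    (IsScalarTower.toAlgHom R[X] (integralClosure R K)[X] K[X]).range =
      integralClosure R[X] K[X] := by
  ext p
  rw [mem_integralClosure_iff, isIntegral_iff_isIntegral_coeff]
  refine (lifts_iff_coeff_lifts (f := algebraMap (integralClosure R K) K) p).trans ?_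
  simp only [Subalgebra.setRange_algebraMap, SetLike.mem_coe, mem_integralClosure_iff]

theorem mem_strictClosure_polynomial_iff {p : K[X]} :
    p ∈ strictClosure R[X] K[X] ↔ ∀ i, p.coeff i ∈ strictClosure R K := by
  let f : (integralClosure R K)[X] →ₐ[R[X]] K[X] := IsScalarTower.toAlgHom _ _ _
  have hf : Function.Injective f := map_injective _ Subtype.val_injective
  rw [strictClosure_eq_map_dominion hf (range_toAlgHom_polynomial_integralClosure R K)]
  constructor
  · rintro ⟨P, hP, rfl⟩ i
    exact ⟨P.coeff i, mem_dominion_polynomial_iff.1 hP i, (coeff_map _ i).symm⟩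
  · intro hp
    choose c hc hcp using hp
    obtain ⟨P, rfl⟩ : p ∈ lifts (algebraMap (integralClosure R K) K) :=
      (lifts_iff_coeff_lifts p).2 fun i ↦ ⟨c i, hcp i⟩
    have hcoeff (i : ℕ) : P.coeff i = c i :=
      Subtype.val_injective ((coeff_map _ i).symm.trans (hcp i).symm)
    exact ⟨P, mem_dominion_polynomial_iff.2 fun i ↦ hcoeff i ▸ hc i, rfl⟩

theorem mem_bot_polynomial_iff {p : K[X]} :
    p ∈ (⊥ : Subalgebra R[X] K[X]) ↔ ∀ i, p.coeff i ∈ (⊥ : Subalgebra R K) :=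
  lifts_iff_coeff_lifts p

theorem strictClosure_polynomial_eq_bot_iff :
    strictClosure R[X] K[X] = ⊥ ↔ strictClosure R K = ⊥ := by
  simp only [eq_bot_iff, SetLike.le_def, mem_strictClosure_polynomial_iff, mem_bot_polynomial_iff]
  refine ⟨fun h x hx ↦ ?_, fun h p hp i ↦ h (hp i)⟩
  have hC : ∀ i, (C x).coeff i ∈ strictClosure R K := fun i ↦ by
    rw [coeff_C]
    split_ifs
    exacts [hx, zero_mem _]
  simpa using h hC 0

end Polynomial

section FractionRing

attribute [local instance] Polynomial.algebra

variable {A K L : Type*} [CommRing A] [CommRing K] [CommRing L] [Algebra A K] [Algebra A[X] L]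

theorem C_mem_nonZeroDivisors {t : A} (ht : t ∈ A⁰) : C t ∈ A[X]⁰ :=
  mem_nonZeroDivisors_of_leadingCoeff (by rwa [leadingCoeff_C])

variable (A K L) in
/-- The embedding `Q(A)[X] → Q(A[X])` through which `Q(A)[X]` is regarded as a subring of
`Q(A[X])`; it is the lift along the localization `A[X] → Q(A)[X]` at the constants in `W(A)`. -/
noncomputable def polynomialToFractionRing [IsFractionRing A K] [IsFractionRing A[X] L] :
    K[X] →ₐ[A[X]] L :=
  have := Polynomial.isLocalization A⁰ K
  IsLocalization.liftAlgHom (M := A⁰.map C) (f := Algebra.ofId A[X] L) <| by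
    rintro ⟨_, t, ht, rfl⟩
    exact IsLocalization.map_units L (⟨C t, C_mem_nonZeroDivisors ht⟩ : A[X]⁰)

variable (A K L) in
theorem polynomialToFractionRing_injective [IsFractionRing A K] [IsFractionRing A[X] L] :
    Function.Injective (polynomialToFractionRing A K L) := by
  have := Polynomial.isLocalization A⁰ K
  refine (IsLocalization.lift_injective_iff _).2 fun p q ↦ ?_
  have hinjK : Function.Injective (algebraMap A[X] K[X]) :=
    map_injective _ (IsFractionRing.injective A K)
  exact hinjK.eq_iff.trans (IsFractionRing.injective A[X] L).eq_iff.symm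

variable {M : Submonoid A} [IsLocalization M K]

theorem algHom_mul_algebraMap_C_eq_iff {φ : K[X] →ₐ[A[X]] L} (hφ : Function.Injective φ) {p : K[X]}
    {q : A[X]} {t : A} (ht : t ∈ M) :
    φ p * algebraMap A[X] L (C t) = algebraMap A[X] L q ↔
      ∀ i, IsLocalization.mk' K (q.coeff i) (⟨t, ht⟩ : M) = p.coeff i := by
  rw [← φ.commutes, ← φ.commutes, ← map_mul, hφ.eq_iff, Polynomial.ext_iff]
  refine forall_congr' fun i ↦ ?_
  rw [IsLocalization.mk'_eq_iff_eq_mul, eq_comm, algebraMap_def, coe_mapRingHom, coeff_map,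
    map_C, coeff_mul_C]

variable (M) in
theorem mem_range_algHom_iff_exists_mul_C (φ : K[X] →ₐ[A[X]] L) {ξ : L} :
    ξ ∈ φ.range ↔
      ∃ q t, t ∈ M ∧ ξ * algebraMap A[X] L (C t) = algebraMap A[X] L q := by
  have := Polynomial.isLocalization M K
  constructor
  · rintro ⟨p, rfl⟩
    obtain ⟨⟨q, _, t, ht, rfl⟩, h⟩ := IsLocalization.surj (M.map C) p
    refine ⟨q, t, ht, ?_⟩
    rw [← φ.commutes, ← φ.commutes, ← h]
    exact (map_mul φ _ _).symm
  · rintro ⟨q, t, ht, h⟩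
    let s : M.map (C : A →+* A[X]) := ⟨C t, t, ht, rfl⟩
    have hunit : IsUnit (algebraMap A[X] L (C t)) :=
      φ.commutes (C t) ▸ (IsLocalization.map_units K[X] s).map φ
    refine ⟨IsLocalization.mk' K[X] q s, hunit.mul_left_injective ?_⟩
    calc φ (IsLocalization.mk' K[X] q s) * algebraMap A[X] L (C t)
        = φ (IsLocalization.mk' K[X] q s * algebraMap A[X] K[X] (C t)) := by
          rw [map_mul, φ.commutes]
      _ = algebraMap A[X] L q := by rw [IsLocalization.mk'_spec K[X] q s, φ.commutes]
      _ = ξ * algebraMap A[X] L (C t) := h.symm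

theorem exists_coeff_mem_and_apply_eq_iff {φ : K[X] →ₐ[A[X]] L} (hφ : Function.Injective φ)
    {D : Set K} {ξ : L} :
    (∃ p, (∀ i, p.coeff i ∈ D) ∧ φ p = ξ) ↔
      ∃ (q : A[X]) (t : A) (ht : t ∈ M),
        (∀ i, IsLocalization.mk' K (q.coeff i) (⟨t, ht⟩ : M) ∈ D) ∧
          ξ * algebraMap A[X] L (C t) = algebraMap A[X] L q := by
  constructor
  · rintro ⟨p, hp, rfl⟩
    obtain ⟨q, t, ht, h⟩ := (mem_range_algHom_iff_exists_mul_C M φ).1 ⟨p, rfl⟩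
    exact ⟨q, t, ht, fun i ↦ (algHom_mul_algebraMap_C_eq_iff hφ ht).1 h i ▸ hp i, h⟩
  · rintro ⟨q, t, ht, hD, h⟩
    obtain ⟨p, rfl⟩ := (mem_range_algHom_iff_exists_mul_C M φ).2 ⟨q, t, ht, h⟩
    exact ⟨p, fun i ↦ (algHom_mul_algebraMap_C_eq_iff hφ ht).1 h i ▸ hD i, rfl⟩

end FractionRing

/-- Suppose the integral closure of `B = A[X]` in `Q(B)` is contained in `Q(A)[X]`
(every integral `ξ ∈ Q(B)` can be written as `q / C t` with `q ∈ A[X]` and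
`t ∈ W(A)`).  Then `B* = (A*)[X]`: an element `ξ ∈ Q(B)` lies in the strict closure
of `B` iff `ξ = q / C t` where all the coefficient fractions `(q.coeff i)/t ∈ Q(A)`
lie in the strict closure of `A`.  Consequently `B` is strictly closed iff `A` is. -/
theorem strictClosure_polynomial (A : Type*) [CommRing A]
    (hyp : ∀ ξ : FractionRing (Polynomial A),
      ξ ∈ integralClosure (Polynomial A) (FractionRing (Polynomial A)) →
      ∃ (q : Polynomial A) (t : A), t ∈ nonZeroDivisors A ∧
        ξ * algebraMap (Polynomial A) (FractionRing (Polynomial A)) (Polynomial.C t) =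
          algebraMap (Polynomial A) (FractionRing (Polynomial A)) q) :
    (∀ ξ : FractionRing (Polynomial A),
      ξ ∈ strictClosureSet (Polynomial A) ↔
        ∃ (q : Polynomial A) (t : A) (ht : t ∈ nonZeroDivisors A),
          (∀ i : ℕ, IsLocalization.mk' (FractionRing A) (q.coeff i)
            (⟨t, ht⟩ : nonZeroDivisors A) ∈ strictClosureSet A) ∧
          ξ * algebraMap (Polynomial A) (FractionRing (Polynomial A)) (Polynomial.C t) =
            algebraMap (Polynomial A) (FractionRing (Polynomial A)) q) ∧
    (IsStrictlyClosed (Polynomial A) ↔ IsStrictlyClosed A) := by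
  let := Polynomial.algebra A (FractionRing A)
  let φ := polynomialToFractionRing A (FractionRing A) (FractionRing A[X])
  have hφ : Function.Injective φ := polynomialToFractionRing_injective A _ _
  have hclosure : strictClosure A[X] (FractionRing A[X]) =
      (strictClosure A[X] (FractionRing A)[X]).map φ :=
    strictClosure_eq_map_strictClosure hφ fun ξ hξ ↦
      (mem_range_algHom_iff_exists_mul_C A⁰ φ).2 (hyp ξ hξ)
  constructor
  · intro ξ
    rw [← coe_strictClosure_fractionRing, ← coe_strictClosure_fractionRing, hclosure,
      SetLike.mem_coe, Subalgebra.mem_map, ← exists_coeff_mem_and_apply_eq_iff hφ]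
    simp only [mem_strictClosure_polynomial_iff, SetLike.mem_coe]
  · rw [isStrictlyClosed_iff_strictClosure_eq_bot, isStrictlyClosed_iff_strictClosure_eq_bot,
      hclosure, ← Algebra.map_bot φ, (Subalgebra.map_injective hφ).eq_iff,
      strictClosure_polynomial_eq_bot_iff]
end

section
/- Let R be a Noetherian semi-local ring such that R_M is a one-dimensional Cohen–Macaulay local ring for every maximal ideal M of R, and suppose that R is an Arf ring. Then for every finite subgroup G of the group of ring automorphisms of R whose order is invertible in R, the invariant subring R^G = {a ∈ R : σ(a) = a for all σ ∈ G} is an Arf ring. -/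
open scoped TensorProduct

/-- `A` is a *weakly Arf ring*: whenever `x, y, z ∈ A` with `x` a non-zerodivisor on `A`
and the fractions `y/x` and `z/x` in the total ring of fractions `Q(A)` are integral
over `A`, then `y * z ∈ x A`. -/
def IsWeaklyArfRing (A : Type*) [CommRing A] : Prop :=
  ∀ (x y z : A) (hx : x ∈ nonZeroDivisors A),
    IsIntegral A (IsLocalization.mk' (FractionRing A) y
      (⟨x, hx⟩ : nonZeroDivisors A)) →
    IsIntegral A (IsLocalization.mk' (FractionRing A) z
      (⟨x, hx⟩ : nonZeroDivisors A)) →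
    y * z ∈ Ideal.span {x}

/-- `a` belongs to the integral closure of the ideal `I`: it satisfies an equation
`a ^ n + c 1 * a ^ (n - 1) + ⋯ + c n = 0` with `c i ∈ I ^ i`, for some `n ≥ 1`. -/
def MemIdealIntegralClosure {A : Type*} [CommRing A] (I : Ideal A) (a : A) : Prop :=
  ∃ n : ℕ, 0 < n ∧ ∃ c : ℕ → A,
    (∀ i ∈ Finset.Icc 1 n, c i ∈ I ^ i) ∧
    a ^ n + ∑ i ∈ Finset.Icc 1 n, c i * a ^ (n - i) = 0

/-- The integral closure `Ī` of an ideal `I` of `A`, as a subset of `A`. -/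
def idealIntegralClosure {A : Type*} [CommRing A] (I : Ideal A) : Set A :=
  {a | MemIdealIntegralClosure I a}

/-- An ideal `I` is integrally closed if `Ī = I`. -/
def Ideal.IsIntegrallyClosedIdeal {A : Type*} [CommRing A] (I : Ideal A) : Prop :=
  idealIntegralClosure I = (I : Set A)

/-- `A` is an *Arf ring*: (1) every integrally closed ideal of `A` containing a
non-zerodivisor has a principal reduction, i.e. `I ^ (n + 1) = a * I ^ n` for some
`n ≥ 0` and `a ∈ I`; and (2) whenever `x, y, z ∈ A` with `x` a non-zerodivisor and
`y/x, z/x` integral over `A` in `Q(A)`, then `y * z ∈ x A`. -/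
def IsArfRing (A : Type*) [CommRing A] : Prop :=
  (∀ I : Ideal A, Ideal.IsIntegrallyClosedIdeal I →
      (∃ x ∈ I, x ∈ nonZeroDivisors A) →
      ∃ (n : ℕ) (a : A), a ∈ I ∧ I ^ (n + 1) = Ideal.span {a} * I ^ n) ∧
  IsWeaklyArfRing A

/-- `xs` is a regular sequence on `R`: for each `i`, the element `xs i` acts injectively
on `R / (xs 0, …, xs (i-1))`. -/
def IsRegularSeq (R : Type*) [CommRing R] (xs : List R) : Prop :=
  ∀ (i : ℕ) (h : i < xs.length),
    IsSMulRegular (R ⧸ Ideal.span {y : R | y ∈ xs.take i}) (xs.get ⟨i, h⟩)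

/-- For a Noetherian local ring `R`, `depth R ≥ n` holds iff there is a regular sequence
of length `n` consisting of elements of the maximal ideal. -/
def RingDepthGE (R : Type*) [CommRing R] [IsLocalRing R] (n : ℕ) : Prop :=
  ∃ xs : List R, xs.length = n ∧ (∀ x ∈ xs, x ∈ IsLocalRing.maximalIdeal R) ∧
    IsRegularSeq R xs

/-- The invariant subring `A^G = {a ∈ A : σ a = a for all σ ∈ G}` of `A` under a
subgroup `G` of the ring automorphisms of `A`. -/
def invariantSubring {A : Type*} [CommRing A] (G : Subgroup (A ≃+* A)) : Subring A where
  carrier := {a | ∀ σ ∈ G, σ a = a}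
  mul_mem' := by
    intro a b ha hb σ hσ
    simp only [map_mul, ha σ hσ, hb σ hσ]
  one_mem' := by intro σ _; simp
  add_mem' := by
    intro a b ha hb σ hσ
    simp only [map_add, ha σ hσ, hb σ hσ]
  zero_mem' := by intro σ _; simp
  neg_mem' := by
    intro a ha σ hσ
    simp only [map_neg, ha σ hσ]

/-!
Let `A = R ^ G` and let `I` be an integrally closed ideal of `A` containing a non-zerodivisor.
Let `J` be the largest ideal of `R` having `I R` as a reduction. It is stable under `G` and
integrally closed, so `J ^ 2 = a J` for some `a ∈ J` because `R` is Arf. Hence the multiplier ring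
`S = (J : J) ⊆ Q(R)`, a finite `R`-algebra on which `G` acts, satisfies `I S = J S = a S`.

The group `G` permutes transitively the maximal ideals of `S` above a given maximal ideal of
`S ^ G`, and elements of `I` are fixed by `G`; so for `i ∈ I` the condition `i S = a S` can be
tested at one maximal ideal above each maximal ideal of `S ^ G`. Since `I` is integrally closed, it
is an `S ^ G`-module, and the Chinese remainder theorem over the semilocal ring `S ^ G` produces a
single `f ∈ I` with `f S = a S`. For `i, j ∈ I` the quotient `i / f` then lies in `S ^ G`, so
`(i / f) j ∈ I`, which means `I ^ 2 = f I`.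

Both this argument and the descent of the second Arf condition need non-zerodivisors of `A` to stay
non-zerodivisors in `R`. If `x s = 0` with `x ∈ A` a non-zerodivisor of `A`, then `x` annihilates
the non-leading coefficients of `∏ (X - g s)`, which lie in `A`, so `s` is nilpotent; as `R` has no
embedded primes, this suffices.
-/

section Reductions

variable {R S : Type*} [CommRing R] [CommRing S] {E J L : Ideal R}

theorem ideal_pow_add_le_pow_mul_pow {k : ℕ} (h : L ^ (k + 1) ≤ J * L ^ k) (j : ℕ) :
    L ^ (k + j) ≤ J ^ j * L ^ k := by
  induction j with
  | zero => simp
  | succ j ih =>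
    calc L ^ (k + (j + 1)) = L * L ^ (k + j) := by rw [← pow_succ']; rfl
      _ ≤ L * (J ^ j * L ^ k) := Ideal.mul_mono_right ih
      _ = J ^ j * L ^ (k + 1) := by ring
      _ ≤ J ^ j * (J * L ^ k) := Ideal.mul_mono_right h
      _ = J ^ (j + 1) * L ^ k := by ring

theorem ideal_sup_pow_succ_le (J L : Ideal R) (k : ℕ) :
    (J ⊔ L) ^ (k + 1) ≤ J * (J ⊔ L) ^ k ⊔ L ^ (k + 1) := by
  induction k with
  | zero => simp
  | succ k ih =>
    have hL : L * (J ⊔ L) ^ (k + 1) ≤ J * (J ⊔ L) ^ (k + 1) ⊔ L ^ (k + 2) :=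
      calc L * (J ⊔ L) ^ (k + 1) ≤ L * (J * (J ⊔ L) ^ k ⊔ L ^ (k + 1)) := Ideal.mul_mono_right ih
        _ = J * (L * (J ⊔ L) ^ k) ⊔ L ^ (k + 2) := by
            rw [Ideal.mul_sup, ← pow_succ', mul_left_comm]
        _ ≤ J * (J ⊔ L) ^ (k + 1) ⊔ L ^ (k + 2) := by
            rw [pow_succ' (J ⊔ L)]
            gcongr
            exact le_sup_right
    rw [pow_succ', Ideal.sup_mul]
    exact sup_le le_sup_left hL

theorem ideal_le_of_span_singleton_mul_le {a : R} (ha : a ∈ nonZeroDivisors R)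
    (h : Ideal.span {a} * J ≤ Ideal.span {a} * L) : J ≤ L := by
  intro z hz
  obtain ⟨w, hw, hwz⟩ := Ideal.span_singleton_mul_le_span_singleton_mul.mp h z hz
  rwa [(mul_cancel_left_mem_nonZeroDivisors ha).mp hwz]

/-- `E` is a *reduction* of the ideal `J` if `E ⊆ J` and `J ^ (n + 1) = E * J ^ n` for some `n`.
Only the nontrivial inclusion of the equality is recorded. -/
structure IsReduction (E J : Ideal R) : Prop where
  le : E ≤ J
  exists_pow_succ_le : ∃ n : ℕ, J ^ (n + 1) ≤ E * J ^ n

namespace IsReduction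

theorem refl (J : Ideal R) : IsReduction J J :=
  ⟨le_rfl, 0, by simp⟩

theorem map (f : R →+* S) (h : IsReduction E J) : IsReduction (E.map f) (J.map f) := by
  obtain ⟨n, hn⟩ := h.exists_pow_succ_le
  refine ⟨Ideal.map_mono h.le, n, ?_⟩
  rw [← Ideal.map_pow, ← Ideal.map_pow, ← Ideal.map_mul]
  exact Ideal.map_mono hn

theorem trans (h₁ : IsReduction E J) (h₂ : IsReduction J L) : IsReduction E L := by
  obtain ⟨n, hn⟩ := h₁.exists_pow_succ_le
  obtain ⟨k, hk⟩ := h₂.exists_pow_succ_le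
  refine ⟨h₁.le.trans h₂.le, n + k, ?_⟩
  calc L ^ (n + k + 1) = L ^ (k + (n + 1)) := by ring
    _ ≤ J ^ (n + 1) * L ^ k := ideal_pow_add_le_pow_mul_pow hk _
    _ ≤ E * J ^ n * L ^ k := Ideal.mul_mono_left hn
    _ ≤ E * L ^ n * L ^ k :=
        Ideal.mul_mono_left (Ideal.mul_mono_right (Ideal.pow_right_mono h₂.le n))
    _ = E * L ^ (n + k) := by rw [pow_add, mul_assoc]

theorem sup_of_pow_succ_le {k : ℕ} (h : L ^ (k + 1) ≤ J * (J ⊔ L) ^ k) : IsReduction J (J ⊔ L) :=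
  ⟨le_sup_left, k, (ideal_sup_pow_succ_le J L k).trans (sup_le le_rfl h)⟩

theorem sup (hJ : IsReduction E J) (hL : IsReduction E L) : IsReduction E (J ⊔ L) := by
  obtain ⟨n, hn⟩ := hL.exists_pow_succ_le
  refine hJ.trans (sup_of_pow_succ_le (hn.trans ?_))
  exact Ideal.mul_mono hJ.le (Ideal.pow_right_mono le_sup_right n)

theorem sq_le_mul_of_sq_eq {a : R} (h : IsReduction E J) (ha : a ∈ nonZeroDivisors R)
    (hJ : J ^ 2 = Ideal.span {a} * J) : J ^ 2 ≤ E * J := by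
  obtain ⟨n, hn⟩ := h.exists_pow_succ_le
  have hpow (k : ℕ) : J ^ (k + 1) = Ideal.span {a ^ k} * J := by
    induction k with
    | zero => simp
    | succ k ih =>
      rw [pow_succ, ih, mul_assoc, ← sq, hJ, ← mul_assoc, Ideal.span_singleton_mul_span_singleton,
        pow_succ]
  have hcancel : Ideal.span {a ^ n} * J ^ 2 ≤ Ideal.span {a ^ n} * (E * J) :=
    calc Ideal.span {a ^ n} * J ^ 2 = J ^ (n + 1) * J := by rw [hpow n, sq, mul_assoc]
      _ ≤ E * J ^ n * J := Ideal.mul_mono_left hn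
      _ = Ideal.span {a ^ n} * (E * J) := by rw [mul_assoc, ← pow_succ, hpow, mul_left_comm]
  exact ideal_le_of_span_singleton_mul_le (pow_mem ha n) hcancel

end IsReduction

theorem MemIdealIntegralClosure.isReduction_sup_span {r : R} (hr : MemIdealIntegralClosure J r) :
    IsReduction J (J ⊔ Ideal.span {r}) := by
  obtain ⟨n, hn, c, hc, hsum⟩ := hr
  obtain ⟨k, rfl⟩ := Nat.exists_eq_succ_of_ne_zero hn.ne'
  apply IsReduction.sup_of_pow_succ_le (k := k)
  rw [Ideal.span_singleton_pow, Ideal.span_singleton_le_iff_mem,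
    eq_neg_of_add_eq_zero_left hsum]
  refine neg_mem (sum_mem fun i hi ↦ ?_)
  obtain ⟨hi₁, hik⟩ := Finset.mem_Icc.mp hi
  have hr_mem : r ∈ J ⊔ Ideal.span {r} := Ideal.mem_sup_right (Ideal.mem_span_singleton_self r)
  have hpow : J ^ i * (J ⊔ Ideal.span {r}) ^ (k + 1 - i) ≤ J * (J ⊔ Ideal.span {r}) ^ k := by
    rw [← Nat.add_sub_cancel' hi₁, pow_add, pow_one, mul_assoc]
    conv_rhs => rw [show k = i - 1 + (k + 1 - (1 + (i - 1))) by omega, pow_add]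
    gcongr
    exact le_sup_left
  exact hpow (Ideal.mul_mem_mul (hc i hi) (Ideal.pow_mem_pow hr_mem _))

theorem MemIdealIntegralClosure.of_mem {r : R} (hr : r ∈ J) : MemIdealIntegralClosure J r :=
  ⟨1, one_pos, fun _ ↦ -r, by simpa using hr, by simp⟩

/-- The largest ideal of which `E` is a reduction, when `R` is Noetherian. -/
def reductionClosure (E : Ideal R) : Ideal R :=
  sSup {L | IsReduction E L}

theorem IsReduction.le_reductionClosure (h : IsReduction E L) : L ≤ reductionClosure E :=
  le_sSup h

theorem isReduction_reductionClosure [IsNoetherianRing R] (E : Ideal R) :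
    IsReduction E (reductionClosure E) :=
  CompleteLattice.WellFoundedGT.isSupClosedCompact (Ideal R) inferInstance {L | IsReduction E L}
    ⟨E, .refl E⟩ fun _ hJ _ hL ↦ IsReduction.sup hJ hL

theorem isIntegrallyClosedIdeal_reductionClosure [IsNoetherianRing R] (E : Ideal R) :
    (reductionClosure E).IsIntegrallyClosedIdeal := by
  refine Set.Subset.antisymm (fun r hr ↦ ?_) fun r hr ↦ MemIdealIntegralClosure.of_mem hr
  have h := (isReduction_reductionClosure E).trans (MemIdealIntegralClosure.isReduction_sup_span hr)
  exact h.le_reductionClosure (Ideal.mem_sup_right (Ideal.mem_span_singleton_self r))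

theorem map_reductionClosure_le [IsNoetherianRing R] {f : R →+* R} (h : E.map f = E) :
    (reductionClosure E).map f ≤ reductionClosure E := by
  have hf := (isReduction_reductionClosure E).map f
  rw [h] at hf
  exact hf.le_reductionClosure

end Reductions

section IntegrallyClosedIdeals

open Polynomial

variable {A K : Type*} [CommRing A] [CommRing K] [Algebra A K] {I : Ideal A}

theorem memIdealIntegralClosure_of_monic {p : A[X]} {y : A} (hp : p.Monic)
    (hcoeff : ∀ i, p.coeff i ∈ I ^ (p.natDegree - i)) (hy : p.eval y = 0) :
    MemIdealIntegralClosure I y := by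
  rcases p.natDegree.eq_zero_or_pos with h0 | hpos
  · have : Subsingleton A := subsingleton_of_zero_eq_one <| by
      rw [← hy, hp.natDegree_eq_zero.mp h0, eval_one]
    exact .of_mem (by simp [Subsingleton.elim y 0])
  refine ⟨p.natDegree, hpos, fun i ↦ p.coeff (p.natDegree - i), fun i hi ↦ ?_, ?_⟩
  · simpa [Nat.sub_sub_self (Finset.mem_Icc.mp hi).2] using hcoeff (p.natDegree - i)
  · rw [eval_eq_sum_range, ← Finset.sum_flip, Nat.range_succ_eq_Icc_zero,
      ← Finset.add_sum_Ioc_eq_sum_Icc (Nat.zero_le _), Nat.sub_zero, hp.coeff_natDegree,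
      one_mul] at hy
    exact hy

theorem mem_of_isIntegral_mul_of_isIntegrallyClosedIdeal (hI : I.IsIntegrallyClosedIdeal)
    (hinj : Function.Injective (algebraMap A K)) {x y : A} {q : K} (hx : x ∈ I)
    (hq : IsIntegral A q) (h : algebraMap A K y = q * algebraMap A K x) : y ∈ I := by
  obtain ⟨p, hp, hpq⟩ := hq
  suffices MemIdealIntegralClosure I y from hI.subset this
  refine memIdealIntegralClosure_of_monic (p := p.scaleRoots x) ((monic_scaleRoots_iff x).mpr hp)
    (fun i ↦ ?_) (hinj ?_)
  · rw [coeff_scaleRoots, natDegree_scaleRoots]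
    exact Ideal.mul_mem_left _ _ (Ideal.pow_mem_pow hx _)
  · rw [map_zero, ← aeval_algebraMap_apply_eq_algebraMap_eval, h, mul_comm]
    exact scaleRoots_aeval_eq_zero hpq

end IntegrallyClosedIdeals

section MultiplierRings

variable {R K : Type*} [CommRing R] [CommRing K] [Algebra R K]

/-- The *multiplier ring* `(N : N)` of an `R`-submodule `N` of an `R`-algebra `K`. -/
def multiplierRing (N : Submodule R K) : Subalgebra R K where
  carrier := {q | ∀ z ∈ N, q * z ∈ N}
  mul_mem' hp hq z hz := by rw [mul_assoc]; exact hp _ (hq z hz)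
  add_mem' hp hq z hz := by rw [add_mul]; exact add_mem (hp z hz) (hq z hz)
  algebraMap_mem' r z hz := by rw [← Algebra.smul_def]; exact N.smul_mem r hz

theorem finite_multiplierRing [IsNoetherianRing R] {N : Submodule R K} (hN : N.FG) {c : K}
    (hcN : c ∈ N) (hc : IsUnit c) : Module.Finite R (multiplierRing N) := by
  have : Module.Finite R N := Module.Finite.iff_fg.mpr hN
  let f : multiplierRing N →ₗ[R] N :=
    ((LinearMap.mulRight R c).comp (multiplierRing N).val.toLinearMap).codRestrict N
      fun q ↦ q.2 c hcN
  refine Module.Finite.of_injective f fun p q hpq ↦ Subtype.ext (hc.mul_right_cancel ?_)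
  exact congrArg Subtype.val hpq

theorem isIntegral_of_mem_multiplierRing [IsNoetherianRing R] {N : Submodule R K} (hN : N.FG)
    {c : K} (hcN : c ∈ N) (hc : IsUnit c) {q : K} (hq : q ∈ multiplierRing N) : IsIntegral R q :=
  have := finite_multiplierRing hN hcN hc
  IsIntegral.of_mem_of_fg _ (Module.Finite.iff_fg.mp this) q hq

end MultiplierRings

section Stability

variable {R : Type*} [CommRing R]

theorem mem_nonZeroDivisors_of_pow_succ_eq {J : Ideal R} {a x : R} {n : ℕ} (hxJ : x ∈ J)
    (hx : x ∈ nonZeroDivisors R) (h : J ^ (n + 1) = Ideal.span {a} * J ^ n) :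
    a ∈ nonZeroDivisors R := by
  have hx_pow : x ^ (n + 1) ∈ Ideal.span {a} * J ^ n := h ▸ Ideal.pow_mem_pow hxJ _
  obtain ⟨w, -, hw⟩ := Ideal.mem_span_singleton_mul.mp hx_pow
  have haw : a * w ∈ nonZeroDivisors R := hw ▸ pow_mem hx _
  exact (mul_mem_nonZeroDivisors.mp haw).1

theorem isIntegral_mk'_of_pow_succ_eq [IsNoetherianRing R] {J : Ideal R} {a y : R} {n : ℕ}
    (haJ : a ∈ J) (ha : a ∈ nonZeroDivisors R) (h : J ^ (n + 1) = Ideal.span {a} * J ^ n)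
    (hy : y ∈ J) :
    IsIntegral R (IsLocalization.mk' (FractionRing R) y (⟨a, ha⟩ : nonZeroDivisors R)) := by
  have hau : IsUnit (algebraMap R (FractionRing R) a) :=
    IsLocalization.map_units (FractionRing R) (⟨a, ha⟩ : nonZeroDivisors R)
  let N := IsLocalization.coeSubmodule (FractionRing R) (J ^ n)
  have hN : N.FG := (IsNoetherian.noetherian (J ^ n)).map _
  have haN : algebraMap R (FractionRing R) a ^ n ∈ N :=
    ⟨a ^ n, Ideal.pow_mem_pow haJ n, map_pow (algebraMap R (FractionRing R)) a n⟩
  refine isIntegral_of_mem_multiplierRing hN haN (hau.pow n) ?_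
  rintro _ ⟨z, hz, rfl⟩
  have hyz : y * z ∈ Ideal.span {a} * J ^ n := h ▸ pow_succ' J n ▸ Ideal.mul_mem_mul hy hz
  obtain ⟨w, hw, hwz⟩ := Ideal.mem_span_singleton_mul.mp hyz
  refine ⟨w, hw, hau.mul_left_cancel ?_⟩
  rw [Algebra.linearMap_apply, Algebra.linearMap_apply, ← mul_assoc, IsLocalization.mk'_spec'_mk,
    ← map_mul, ← map_mul, hwz]

theorem IsArfRing.exists_sq_eq [IsNoetherianRing R] (hR : IsArfRing R) {J : Ideal R}
    (hJ : J.IsIntegrallyClosedIdeal) (hreg : ∃ x ∈ J, x ∈ nonZeroDivisors R) :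
    ∃ a ∈ J, a ∈ nonZeroDivisors R ∧ J ^ 2 = Ideal.span {a} * J := by
  obtain ⟨n, a, haJ, hn⟩ := hR.1 J hJ hreg
  obtain ⟨x, hxJ, hx⟩ := hreg
  have ha := mem_nonZeroDivisors_of_pow_succ_eq hxJ hx hn
  have hint {y : R} (hy : y ∈ J) := isIntegral_mk'_of_pow_succ_eq haJ ha hn hy
  refine ⟨a, haJ, ha, le_antisymm ?_ (sq J ▸ Ideal.mul_mono_left (by simpa using haJ))⟩
  rw [sq, Ideal.mul_le]
  intro y hy z hz
  obtain ⟨w, hw⟩ := Ideal.mem_span_singleton.mp (hR.2 a y z ha (hint hy) (hint hz))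
  have hwJ : w ∈ J :=
    mem_of_isIntegral_mul_of_isIntegrallyClosedIdeal hJ
      (IsFractionRing.injective R (FractionRing R)) hz (hint hy) <| by
        rw [mul_comm, IsLocalization.mul_mk'_eq_mk'_of_mul, IsLocalization.eq_mk'_iff_mul_eq,
          ← map_mul, mul_comm w, ← hw, mul_comm]
  exact Ideal.mem_span_singleton_mul.mpr ⟨w, hwJ, hw.symm⟩

end Stability

section SemilocalRings

variable {B S V : Type*} [CommRing B] [CommRing S] [Algebra B S]

theorem finite_maximalSpectrum_iff {R : Type*} [CommRing R] :
    Finite (MaximalSpectrum R) ↔ {M : Ideal R | M.IsMaximal}.Finite := by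
  rw [(MaximalSpectrum.equivSubtype R).finite_iff, ← Set.finite_coe_iff]
  rfl

theorem finite_maximalSpectrum_of_module_finite (B : Type*) [CommRing B] [Algebra B S]
    [Module.Finite B S] [Finite (MaximalSpectrum B)] : Finite (MaximalSpectrum S) := by
  have hB := finite_maximalSpectrum_iff.mp ‹Finite (MaximalSpectrum B)›
  refine finite_maximalSpectrum_iff.mpr ((hB.biUnion (t := fun M ↦ M.primesOver S)
    fun M _ ↦ Algebra.QuasiFinite.finite_primesOver M).subset fun N hN ↦ ?_)
  have : N.IsMaximal := hN
  exact Set.mem_biUnion (x := N.under B) (Ideal.isMaximal_comap_of_isIntegral_of_isMaximal N)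
    ⟨this.isPrime, ⟨rfl⟩⟩

theorem finite_maximalSpectrum_of_isIntegral (S : Type*) [CommRing S] [Algebra B S]
    [FaithfulSMul B S] [Algebra.IsIntegral B S] [Finite (MaximalSpectrum S)] :
    Finite (MaximalSpectrum B) := by
  let f (M : MaximalSpectrum S) : MaximalSpectrum B :=
    ⟨M.asIdeal.under B, have := M.isMaximal
      Ideal.isMaximal_comap_of_isIntegral_of_isMaximal M.asIdeal⟩
  refine Finite.of_surjective f fun n ↦ ?_
  have hker : RingHom.ker (algebraMap B S) ≤ n.asIdeal := by
    rw [(RingHom.injective_iff_ker_eq_bot _).mp (FaithfulSMul.algebraMap_injective B S)]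
    exact bot_le
  have := n.isMaximal
  obtain ⟨M, hM, hMn⟩ := Ideal.exists_ideal_over_maximal_of_isIntegral n.asIdeal hker
  exact ⟨⟨M, hM⟩, MaximalSpectrum.ext hMn⟩

variable [AddCommGroup V] [Module B V]

theorem exists_forall_sub_mem_smul [Finite (MaximalSpectrum B)] {T : Submodule B V}
    (t : MaximalSpectrum B → T) :
    ∃ s ∈ T, ∀ n, s - t n ∈ n.asIdeal • T := by
  classical
  cases nonempty_fintype (MaximalSpectrum B)
  have hcoprime : Pairwise (Function.onFun IsCoprime (MaximalSpectrum.asIdeal (R := B))) :=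
    fun _ _ ↦ MaximalSpectrum.isCoprime_of_ne
  choose e he using fun n ↦
    Ideal.exists_forall_sub_mem_ideal hcoprime fun m ↦ if m = n then 1 else 0
  refine ⟨∑ m, e m • t m, sum_mem fun m _ ↦ T.smul_mem _ (t m).2, fun n ↦ ?_⟩
  have hsum : ∑ m, e m • (t m : V) - t n = ∑ m, (e m - if n = m then 1 else 0) • (t m : V) := by
    simp [sub_smul]
  rw [hsum]
  exact sum_mem fun m _ ↦ Submodule.smul_mem_smul (he m n) (t m).2

variable [Module S V]

theorem span_singleton_eq_of_forall_mem_smul {α t : V} (ht : t ∈ Submodule.span S {α})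
    (h : ∀ M : Ideal S, M.IsMaximal → t ∈ M • Submodule.span S {α} →
      Submodule.span S {α} ≤ M • Submodule.span S {α}) :
    Submodule.span S {t} = Submodule.span S {α} := by
  refine le_antisymm ((Submodule.span_singleton_le_iff_mem _ _).mpr ht) ?_
  rw [Submodule.span_singleton_le_iff_mem, ← one_smul S α, ← Submodule.mem_colon_singleton,
    ← Ideal.eq_top_iff_one]
  by_contra hne
  obtain ⟨M, hM, hle⟩ := Ideal.exists_le_maximal _ hne
  obtain ⟨c, rfl⟩ := Submodule.mem_span_singleton.mp ht
  have hcM : c ∈ M :=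
    hle (Submodule.mem_colon_singleton.mpr (Submodule.mem_span_singleton_self (c • α)))
  have hα : α ∈ M • Submodule.span S {α} :=
    h M hM (Submodule.smul_mem_smul hcM (Submodule.mem_span_singleton_self α))
      (Submodule.mem_span_singleton_self α)
  obtain ⟨m, hmM, hm⟩ := Submodule.mem_smul_span_singleton.mp hα
  have hsub : 1 - m ∈ M :=
    hle (Submodule.mem_colon_singleton.mpr (by rw [sub_smul, one_smul, hm, sub_self]; simp))
  exact hM.ne_top ((Ideal.eq_top_iff_one M).mpr (by simpa using add_mem hsub hmM))

section GroupAction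

open Pointwise

variable {G : Type*} [Group G] [MulSemiringAction G S] [DistribMulAction G V]
  [SMulDistribClass G S V]

theorem smul_mem_span_of_forall_smul_eq {T : Set V} (hT : ∀ t ∈ T, ∀ g : G, g • t = t) (g : G)
    {x : V} (hx : x ∈ Submodule.span S T) : g • x ∈ Submodule.span S T := by
  induction hx using Submodule.span_induction with
  | mem t ht => rw [hT t ht g]; exact Submodule.subset_span ht
  | zero => simp
  | add x y _ _ hx hy => rw [smul_add]; exact add_mem hx hy
  | smul s x _ hx => rw [smul_distrib_smul]; exact Submodule.smul_mem _ _ hx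

theorem smul_mem_pointwise_smul_smul {N : Submodule S V} (hN : ∀ g : G, ∀ x ∈ N, g • x ∈ N)
    (g : G) {M : Ideal S} {x : V} (hx : x ∈ M • N) : g • x ∈ (g • M) • N := by
  induction hx using Submodule.smul_induction_on' with
  | smul r hr n hn =>
    rw [smul_distrib_smul]
    exact Submodule.smul_mem_smul (Ideal.smul_mem_pointwise_smul g r M hr) (hN g n hn)
  | add x _ y _ hx hy => rw [smul_add]; exact add_mem hx hy

variable [Finite G] [SMulCommClass G B S] [Algebra.IsInvariant B S G]

theorem exists_mem_forall_under_eq {T : Submodule B V}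
    (hT : ∀ t ∈ T, ∀ g : G, g • t = t) (n : Ideal B) :
    ∃ t ∈ T, ∀ M : Ideal S, M.IsMaximal → M.under B = n →
      t ∈ M • Submodule.span S (T : Set V) →
        Submodule.span S (T : Set V) ≤ M • Submodule.span S (T : Set V) := by
  set N := Submodule.span S (T : Set V)
  have hN (g : G) (x : V) (hx : x ∈ N) : g • x ∈ N := smul_mem_span_of_forall_smul_eq hT g hx
  by_cases h : ∃ M₀ : Ideal S, M₀.IsMaximal ∧ M₀.under B = n ∧ ¬ N ≤ M₀ • N
  · obtain ⟨M₀, hM₀, rfl, hle⟩ := h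
    obtain ⟨t, htT, ht⟩ : ∃ t ∈ T, t ∉ M₀ • N := by
      by_contra! hT'
      exact hle (Submodule.span_le.mpr hT')
    -- `G` fixes `t` and permutes transitively the maximal ideals above `n`.
    refine ⟨t, htT, fun M hM hMn htM ↦ absurd ?_ ht⟩
    obtain ⟨g, rfl⟩ := Algebra.IsInvariant.exists_smul_of_under_eq B S G M M₀ hMn
    simpa only [hT t htT g] using smul_mem_pointwise_smul_smul hN g htM
  · push Not at h
    exact ⟨0, T.zero_mem, fun M hM hMn _ ↦ h M hM hMn⟩

theorem exists_mem_span_singleton_eq [IsScalarTower B S V] [FaithfulSMul B S]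
    [Finite (MaximalSpectrum S)] {T : Submodule B V} (hT : ∀ t ∈ T, ∀ g : G, g • t = t)
    {α : V} (hα : Submodule.span S (T : Set V) = Submodule.span S {α}) :
    ∃ t ∈ T, Submodule.span S {t} = Submodule.span S {α} := by
  have := Algebra.IsInvariant.isIntegral B S G
  have := finite_maximalSpectrum_of_isIntegral (B := B) S
  choose t htT ht using fun n : MaximalSpectrum B ↦
    exists_mem_forall_under_eq (S := S) hT n.asIdeal
  obtain ⟨s, hsT, hs⟩ := exists_forall_sub_mem_smul fun n ↦ ⟨t n, htT n⟩
  refine ⟨s, hsT, span_singleton_eq_of_forall_mem_smul (hα ▸ Submodule.subset_span hsT)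
    fun M hM hsM ↦ ?_⟩
  rw [← hα] at hsM ⊢
  let n : MaximalSpectrum B := ⟨M.under B, Ideal.isMaximal_comap_of_isIntegral_of_isMaximal M⟩
  have hle (x : V) (hx : x ∈ n.asIdeal • T) : x ∈ M • Submodule.span S (T : Set V) := by
    induction hx using Submodule.smul_induction_on' with
    | smul b hb y hy =>
      rw [← algebraMap_smul S b y]
      exact Submodule.smul_mem_smul hb (Submodule.subset_span hy)
    | add x _ y _ hx hy => exact add_mem hx hy
  exact ht n M hM rfl (by simpa using sub_mem hsM (hle _ (hs n)))

end GroupAction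

end SemilocalRings

section InvariantReduction

open IsLocalization (coeSubmodule)

variable {A R K G : Type*} [CommRing A] [CommRing R] [CommRing K] [Algebra R K]

theorem isUnit_of_mem_span_singleton {x y : K} (hx : x ∈ Submodule.span R {y}) (h : IsUnit x) :
    IsUnit y := by
  obtain ⟨r, rfl⟩ := Submodule.mem_span_singleton.mp hx
  rw [Algebra.smul_def] at h
  exact isUnit_of_mul_isUnit_right h

section Multipliers

variable {J : Ideal R} {a : R}

theorem mem_multiplierRing_coeSubmodule_iff (hau : IsUnit (algebraMap R K a)) (haJ : a ∈ J)
    (hJ : J ^ 2 = Ideal.span {a} * J) {q : K} :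
    q ∈ multiplierRing (coeSubmodule K J) ↔ q * algebraMap R K a ∈ coeSubmodule K J := by
  refine ⟨fun hq ↦ hq _ ⟨a, haJ, rfl⟩, ?_⟩
  rintro ⟨y, hy, hyq⟩ _ ⟨z, hz, rfl⟩
  have hyz : y * z ∈ Ideal.span {a} * J := hJ ▸ sq J ▸ Ideal.mul_mem_mul hy hz
  obtain ⟨w, hw, hwz⟩ := Ideal.mem_span_singleton_mul.mp hyz
  refine ⟨w, hw, hau.mul_left_cancel ?_⟩
  rw [Algebra.linearMap_apply] at hyq ⊢
  rw [← map_mul, hwz, map_mul, hyq, Algebra.linearMap_apply]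
  ring

theorem algebraMap_mem_span_multiplierRing (hau : IsUnit (algebraMap R K a)) (haJ : a ∈ J)
    (hJ : J ^ 2 = Ideal.span {a} * J) {y : R} (hy : y ∈ J) :
    algebraMap R K y ∈ Submodule.span (multiplierRing (coeSubmodule K J)) {algebraMap R K a} := by
  obtain ⟨u, hu⟩ := hau
  have hyu : algebraMap R K y * ↑u⁻¹ * algebraMap R K a = algebraMap R K y := by
    rw [← hu, Units.inv_mul_cancel_right]
  have hmem : algebraMap R K y * ↑u⁻¹ ∈ multiplierRing (coeSubmodule K J) := by
    rw [mem_multiplierRing_coeSubmodule_iff ⟨u, hu⟩ haJ hJ, hyu]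
    exact ⟨y, hy, rfl⟩
  exact Submodule.mem_span_singleton.mpr ⟨⟨_, hmem⟩, hyu⟩

variable [Algebra A R] [Algebra A K] [IsScalarTower A R K]

theorem span_algebraMap_image_eq_span_singleton (hau : IsUnit (algebraMap R K a)) (haJ : a ∈ J)
    (hJ : J ^ 2 = Ideal.span {a} * J) {I : Ideal A} (hIJ : I.map (algebraMap A R) ≤ J)
    (hsq : J ^ 2 ≤ I.map (algebraMap A R) * J) :
    Submodule.span (multiplierRing (coeSubmodule K J)) (algebraMap A K '' I) =
      Submodule.span (multiplierRing (coeSubmodule K J)) {algebraMap R K a} := by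
  set S := multiplierRing (coeSubmodule K J)
  have hJspan {y : R} (hy : y ∈ J) : algebraMap R K y ∈ Submodule.span S {algebraMap R K a} :=
    algebraMap_mem_span_multiplierRing hau haJ hJ hy
  refine le_antisymm (Submodule.span_le.mpr ?_) ((Submodule.span_singleton_le_iff_mem _ _).mpr ?_)
  · rintro _ ⟨i, hi, rfl⟩
    rw [IsScalarTower.algebraMap_apply A R K]
    exact hJspan (hIJ (Ideal.mem_map_of_mem _ hi))
  let L (N : Submodule S K) : Ideal R := (N.restrictScalars R).comap (Algebra.linearMap R K)
  have hL {N : Submodule S K} {r : R} : r ∈ L N ↔ algebraMap R K r ∈ N := Iff.rfl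
  have hE : I.map (algebraMap A R) ≤ L (Submodule.span S (algebraMap A K '' I)) :=
    Ideal.map_le_iff_le_comap.mpr fun i hi ↦ Submodule.subset_span
      ⟨i, hi, IsScalarTower.algebraMap_apply A R K i⟩
  have hEJ : I.map (algebraMap A R) * J ≤
      L (Submodule.span S (algebraMap A K '' I) * Submodule.span S {algebraMap R K a}) := by
    refine Ideal.mul_le.mpr fun e he y hy ↦ ?_
    rw [hL, map_mul]
    exact Submodule.mul_mem_mul (hL.mp (hE he)) (hJspan hy)
  have ha : algebraMap R K (a * a) ∈
      Submodule.span S (algebraMap A K '' I) * Submodule.span S {algebraMap R K a} :=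
    hEJ (hsq (sq a ▸ Ideal.pow_mem_pow haJ 2))
  obtain ⟨w, hw, hwa⟩ := Submodule.mem_mul_span_singleton.mp ha
  rw [map_mul] at hwa
  exact hau.mul_right_cancel hwa ▸ hw

end Multipliers

variable [Group G] [MulSemiringAction G K]

theorem smul_mem_multiplierRing {N : Submodule R K} (hN : ∀ g : G, ∀ z ∈ N, g • z ∈ N) (g : G)
    {q : K} (hq : q ∈ multiplierRing N) : g • q ∈ multiplierRing N := by
  intro z hz
  have h := hN g _ (hq _ (hN g⁻¹ z hz))
  rwa [smul_mul', smul_inv_smul] at h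

theorem exists_mem_span_singleton_eq_of_subalgebra [Finite G] {S : Subalgebra R K}
    (hS : ∀ g : G, ∀ q ∈ S, g • q ∈ S) [Finite (MaximalSpectrum S)] {T : AddSubgroup K}
    (hT : ∀ t ∈ T, ∀ g : G, g • t = t)
    (hST : ∀ b ∈ S, (∀ g : G, g • b = b) → ∀ t ∈ T, b * t ∈ T) {α : K}
    (hα : Submodule.span S (T : Set K) = Submodule.span S {α}) :
    ∃ t ∈ T, Submodule.span S {t} = Submodule.span S {α} := by
  have : IsInvariantSubring G S.toSubring := ⟨fun g _ hq ↦ hS g _ hq⟩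
  let _ : MulSemiringAction G S := IsInvariantSubring.toMulSemiringAction G S.toSubring
  have : SMulDistribClass G S K := ⟨fun g s z ↦ smul_mul' g (s : K) z⟩
  have : Algebra.IsInvariant (FixedPoints.subring S G) S G := ⟨fun s hs ↦ ⟨⟨s, hs⟩, rfl⟩⟩
  have : FaithfulSMul (FixedPoints.subring S G) S :=
    (faithfulSMul_iff_algebraMap_injective _ _).mpr Subtype.val_injective
  let T' : Submodule (FixedPoints.subring S G) K :=
    { T with smul_mem' b t ht := hST b b.1.2 (fun g ↦ congrArg Subtype.val (b.2 g)) t ht }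
  exact exists_mem_span_singleton_eq (G := G) (T := T') hT hα

theorem sq_eq_span_singleton_mul_of_span_eq {S : Subalgebra R K} [Algebra A K] [FaithfulSMul A K]
    (hfix : ∀ (g : G) (x : A), g • algebraMap A K x = algebraMap A K x) {I : Ideal A}
    (hmul : ∀ b ∈ S, (∀ g : G, g • b = b) →
      ∀ j ∈ I, ∃ i ∈ I, algebraMap A K i = b * algebraMap A K j)
    {f : A} (hf : f ∈ I) (hfu : IsUnit (algebraMap A K f))
    (hspan : Submodule.span S (algebraMap A K '' I) = Submodule.span S {algebraMap A K f}) :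
    I ^ 2 = Ideal.span {f} * I := by
  rw [sq]
  refine le_antisymm (Ideal.mul_le.mpr fun i hi j hj ↦ ?_)
    (Ideal.mul_mono_left ((Ideal.span_singleton_le_iff_mem _).mpr hf))
  obtain ⟨b, hb : (b : K) * algebraMap A K f = algebraMap A K i⟩ :=
    Submodule.mem_span_singleton.mp (hspan.le (Submodule.subset_span ⟨i, hi, rfl⟩))
  have hbG (g : G) : g • (b : K) = b := by
    apply hfu.mul_right_cancel
    rw [hb, ← hfix g f, ← smul_mul', hb, hfix]
  obtain ⟨i', hi', hij⟩ := hmul b b.2 hbG j hj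
  refine Ideal.mem_span_singleton_mul.mpr ⟨i', hi', FaithfulSMul.algebraMap_injective A K ?_⟩
  rw [map_mul, map_mul, hij, ← hb]
  ring

variable [MulSemiringAction G R] [SMulDistribClass G R K]

theorem smul_mem_coeSubmodule {J : Ideal R} (hJ : ∀ g : G, ∀ y ∈ J, g • y ∈ J) (g : G) {z : K}
    (hz : z ∈ coeSubmodule K J) : g • z ∈ coeSubmodule K J := by
  obtain ⟨y, hy, rfl⟩ := hz
  exact ⟨g • y, hJ g y hy, algebraMap.coe_smul' g y K⟩

theorem smul_algebraMap_eq_of_isScalarTower (A R : Type*) {K G : Type*} [CommRing A] [CommRing R]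
    [CommRing K] [Algebra A R] [Algebra R K] [Algebra A K] [IsScalarTower A R K] [Group G]
    [MulSemiringAction G R] [MulSemiringAction G K] [SMulCommClass G A R] [SMulDistribClass G R K]
    (g : G) (x : A) : g • algebraMap A K x = algebraMap A K x := by
  rw [IsScalarTower.algebraMap_apply A R K, ← algebraMap.coe_smul', smul_algebraMap]

variable [Finite G] [Algebra A R] [SMulCommClass G A R] [Algebra.IsInvariant A R G]
  [Algebra A K] [IsScalarTower A R K]

theorem exists_mem_algebraMap_eq_mul [FaithfulSMul A K] [FaithfulSMul R K] {I : Ideal A}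
    (hI : I.IsIntegrallyClosedIdeal) {j : A} (hj : j ∈ I) {b : K} (hb : IsIntegral R b)
    (hbG : ∀ g : G, g • b = b) {y : R} (hy : algebraMap R K y = b * algebraMap A K j) :
    ∃ i ∈ I, algebraMap A K i = b * algebraMap A K j := by
  have hyG (g : G) : g • y = y := by
    apply FaithfulSMul.algebraMap_injective R K
    calc algebraMap R K (g • y) = g • algebraMap R K y := algebraMap.coe_smul' g y K
      _ = algebraMap R K y := by rw [hy, smul_mul', hbG, smul_algebraMap_eq_of_isScalarTower A R]
  obtain ⟨i, rfl⟩ := Algebra.IsInvariant.isInvariant (A := A) y hyG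
  rw [← IsScalarTower.algebraMap_apply A R K] at hy
  have := Algebra.IsInvariant.isIntegral A R G
  exact ⟨i, mem_of_isIntegral_mul_of_isIntegrallyClosedIdeal hI
    (FaithfulSMul.algebraMap_injective A K) hj (isIntegral_trans b hb) hy, hy⟩

theorem exists_sq_eq_of_isReduction_map [FaithfulSMul A R] [IsFractionRing R K]
    [IsNoetherianRing R] [Finite (MaximalSpectrum R)] {I : Ideal A} {J : Ideal R} {a : R}
    (hI : I.IsIntegrallyClosedIdeal) (hIJ : IsReduction (I.map (algebraMap A R)) J)
    (hJG : ∀ g : G, ∀ y ∈ J, g • y ∈ J) (haJ : a ∈ J) (ha : a ∈ nonZeroDivisors R)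
    (hJ : J ^ 2 = Ideal.span {a} * J) :
    ∃ f ∈ I, I ^ 2 = Ideal.span {f} * I := by
  have hau : IsUnit (algebraMap R K a) := IsLocalization.map_units K (⟨a, ha⟩ : nonZeroDivisors R)
  let N := coeSubmodule K J
  let S := multiplierRing N
  have hN : N.FG := (IsNoetherian.noetherian J).map _
  have haN : algebraMap R K a ∈ N := ⟨a, haJ, rfl⟩
  have := FaithfulSMul.trans A R K
  have := finite_multiplierRing hN haN hau
  have : Finite (MaximalSpectrum S) := finite_maximalSpectrum_of_module_finite R
  have hIN {i : A} (hi : i ∈ I) : algebraMap A K i ∈ N :=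
    ⟨algebraMap A R i, hIJ.le (Ideal.mem_map_of_mem _ hi),
      (IsScalarTower.algebraMap_apply A R K i).symm⟩
  have hfix (g : G) (x : A) : g • algebraMap A K x = algebraMap A K x :=
    smul_algebraMap_eq_of_isScalarTower A R g x
  have hmul {b : K} (hb : b ∈ S) (hbG : ∀ g : G, g • b = b) {j : A} (hj : j ∈ I) :
      ∃ i ∈ I, algebraMap A K i = b * algebraMap A K j := by
    obtain ⟨y, -, hy⟩ := hb _ (hIN hj)
    exact exists_mem_algebraMap_eq_mul hI hj (isIntegral_of_mem_multiplierRing hN haN hau hb) hbG hy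
  let T : AddSubgroup K := I.toAddSubgroup.map (algebraMap A K).toAddMonoidHom
  have hspan : Submodule.span S (T : Set K) = Submodule.span S {algebraMap R K a} :=
    span_algebraMap_image_eq_span_singleton hau haJ hJ hIJ.le (hIJ.sq_le_mul_of_sq_eq ha hJ)
  obtain ⟨_, ⟨f, hf, rfl⟩, hfa⟩ :
      ∃ t ∈ T, Submodule.span S {t} = Submodule.span S {algebraMap R K a} := by
    refine exists_mem_span_singleton_eq_of_subalgebra (G := G)
      (fun g q ↦ smul_mem_multiplierRing (fun g z ↦ smul_mem_coeSubmodule hJG g) g) ?_ ?_ hspan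
    · rintro _ ⟨i, -, rfl⟩ g
      exact hfix g i
    · rintro b hb hbG _ ⟨j, hj, rfl⟩
      exact hmul hb hbG hj
  have hfu : IsUnit (algebraMap A K f) :=
    isUnit_of_mem_span_singleton (hfa.ge (Submodule.mem_span_singleton_self _)) hau
  exact ⟨f, hf, sq_eq_span_singleton_mul_of_span_eq hfix
    (fun b hb hbG j hj ↦ hmul hb hbG hj) hf hfu (hspan.trans hfa.symm)⟩

end InvariantReduction

section NonZeroDivisors

open Polynomial

variable {A R G : Type*} [CommRing A] [CommRing R] [Algebra A R] [Group G] [MulSemiringAction G R]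
  [SMulCommClass G A R] [Algebra.IsInvariant A R G] [FaithfulSMul A R]

theorem charpoly_eq_X_pow_of_algebraMap_mul_eq_zero [Fintype G] {x : A}
    (hx : x ∈ nonZeroDivisors A) {s : R} (hs : algebraMap A R x * s = 0) :
    MulSemiringAction.charpoly G s = X ^ Fintype.card G := by
  let 𝔞 : Ideal R := (Ideal.span {algebraMap A R x}).annihilator
  have mem_𝔞 {r : R} : Ideal.Quotient.mk 𝔞 r = 0 ↔ algebraMap A R x * r = 0 := by
    rw [Ideal.Quotient.eq_zero_iff_mem, mul_comm]
    exact Submodule.mem_annihilator_span_singleton _ _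
  have hconj (g : G) : Ideal.Quotient.mk 𝔞 (g • s) = 0 := by
    rw [mem_𝔞, ← smul_algebraMap g x, ← smul_mul', hs, smul_zero]
  have hmap : (MulSemiringAction.charpoly G s).map (Ideal.Quotient.mk 𝔞) =
      (X ^ Fintype.card G : R[X]).map (Ideal.Quotient.mk 𝔞) := by
    simp [MulSemiringAction.charpoly_eq, Polynomial.map_prod, hconj]
  ext i
  obtain ⟨c, hc⟩ := Algebra.IsInvariant.isInvariant (A := A) (G := G)
    _ (MulSemiringAction.smul_coeff_charpoly s i)
  obtain ⟨d, hd⟩ : ∃ d, algebraMap A R d = (X ^ Fintype.card G : R[X]).coeff i :=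
    ⟨(X ^ Fintype.card G : A[X]).coeff i, by simp [coeff_X_pow, apply_ite (algebraMap A R)]⟩
  have hcd : Ideal.Quotient.mk 𝔞 (algebraMap A R (c - d)) = 0 := by
    rw [map_sub, map_sub, hc, hd, ← coeff_map, ← coeff_map, hmap, sub_self]
  rw [mem_𝔞, ← map_mul, FaithfulSMul.algebraMap_eq_zero_iff,
    mul_left_mem_nonZeroDivisors_eq_zero_iff hx, sub_eq_zero] at hcd
  rw [← hc, hcd, hd]

theorem isNilpotent_of_algebraMap_mul_eq_zero (G : Type*) [Group G] [MulSemiringAction G R]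
    [SMulCommClass G A R] [Algebra.IsInvariant A R G] [Finite G] {x : A}
    (hx : x ∈ nonZeroDivisors A) {s : R} (hs : algebraMap A R x * s = 0) : IsNilpotent s := by
  cases nonempty_fintype G
  have h := MulSemiringAction.eval_charpoly G s
  rw [charpoly_eq_X_pow_of_algebraMap_mul_eq_zero hx hs, eval_pow, eval_X] at h
  exact ⟨_, h⟩

theorem nonZeroDivisors_le_comap_algebraMap (G : Type*) [Group G] [MulSemiringAction G R]
    [SMulCommClass G A R] [Algebra.IsInvariant A R G] [Finite G] [IsNoetherianRing R]
    (hR : associatedPrimes R R ⊆ minimalPrimes R) :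
    nonZeroDivisors A ≤ (nonZeroDivisors R).comap (algebraMap A R) := by
  intro x hx
  rw [Submonoid.mem_comap]
  by_contra hcon
  rw [← SetLike.mem_coe, ← Set.mem_compl_iff,
    ← biUnion_associatedPrimes_eq_compl_nonZeroDivisors] at hcon
  have hmin := Set.biUnion_mono hR (fun _ _ ↦ subset_rfl) hcon
  rw [minimalPrimes, Ideal.iUnion_minimalPrimes] at hmin
  obtain ⟨y, hy, n, hn⟩ := hmin
  rw [Ideal.mem_bot, mul_pow, ← map_pow] at hn
  have hyn := isNilpotent_of_algebraMap_mul_eq_zero G (pow_mem hx n) hn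
  exact hy (mem_nilradical.mpr (IsNilpotent.of_pow hyn))

end NonZeroDivisors

section CohenMacaulay

open Module.associatedPrimes

variable {R : Type*} [CommRing R]

theorem RingDepthGE.exists_mem_nonZeroDivisors [IsLocalRing R] (h : RingDepthGE R 1) :
    ∃ y ∈ IsLocalRing.maximalIdeal R, y ∈ nonZeroDivisors R := by
  obtain ⟨xs, hlen, hmax, hreg⟩ := h
  obtain ⟨y, rfl⟩ := List.length_eq_one_iff.mp hlen
  refine ⟨y, hmax y (List.mem_singleton_self y), mem_nonZeroDivisors_iff_right.mpr fun z hz ↦ ?_⟩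
  have hz' : y • Ideal.Quotient.mk (Ideal.span {w : R | w ∈ [y].take 0}) z = y • 0 := by
    rw [smul_zero, ← map_zero (Ideal.Quotient.mk _), ← hz, mul_comm]
    rfl
  simpa using Ideal.Quotient.eq_zero_iff_mem.mp (hreg 0 (by simp) hz')

theorem notMem_associatedPrimes_of_ringDepthGE [IsNoetherianRing R] (M : Ideal R) [M.IsPrime]
    (h : RingDepthGE (Localization.AtPrime M) 1) : M ∉ associatedPrimes R R := by
  intro hM
  obtain ⟨y, hyM, hy⟩ := h.exists_mem_nonZeroDivisors
  have hass : IsLocalRing.maximalIdeal (Localization.AtPrime M) ∈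
      associatedPrimes (Localization.AtPrime M) (Localization.AtPrime M) := by
    apply mem_associatedPrimes_of_comap_mem_associatedPrimes_of_isLocalizedModule
      M.primeCompl (Algebra.linearMap R (Localization.AtPrime M))
    simpa [Localization.AtPrime.under_maximalIdeal] using hM
  have hcompl := biUnion_associatedPrimes_eq_compl_nonZeroDivisors (R := Localization.AtPrime M)
  exact hcompl.le (Set.mem_biUnion hass hyM) hy

theorem krullDimLE_one_of_localization
    (h : ∀ (M : Ideal R) [M.IsMaximal], ringKrullDim (Localization.AtPrime M) ≤ 1) :
    Ring.KrullDimLE 1 R := by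
  rw [Ring.krullDimLE_iff, Nat.cast_one, ringKrullDim_le_iff_isMaximal_height_le]
  intro M hM
  rw [← IsLocalization.AtPrime.ringKrullDim_eq_height M (Localization.AtPrime M)]
  exact h M

theorem associatedPrimes_subset_minimalPrimes [IsNoetherianRing R] [Ring.KrullDimLE 1 R]
    (h : ∀ (M : Ideal R) [M.IsMaximal], RingDepthGE (Localization.AtPrime M) 1) :
    associatedPrimes R R ⊆ minimalPrimes R := by
  intro P hP
  refine (Ring.krullDimLE_one_iff.mp inferInstance P hP.isPrime).resolve_right fun hmax ↦ ?_
  exact notMem_associatedPrimes_of_ringDepthGE P (h P) hP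

end CohenMacaulay

section TotalRingOfFractions

variable (G R : Type*) [Group G] [CommRing R] [MulSemiringAction G R]

/-- The action of `G` on the total ring of fractions of `R` extending its action on `R`. -/
noncomputable abbrev fractionRingMulSemiringAction : MulSemiringAction G (FractionRing R) :=
  MulSemiringAction.compHom (FractionRing R)
    ((IsFractionRing.ringEquivOfRingEquivHom R (FractionRing R)).comp
      (MulSemiringAction.toRingAut G R))

theorem smulDistribClass_fractionRing :
    letI := fractionRingMulSemiringAction G R
    SMulDistribClass G R (FractionRing R) :=
  letI := fractionRingMulSemiringAction G R
  ⟨fun g r x ↦ by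
    rw [Algebra.smul_def', Algebra.smul_def', smul_mul']
    congr
    exact IsFractionRing.ringEquivOfRingEquiv_algebraMap (MulSemiringAction.toRingAut G R g) r⟩

end TotalRingOfFractions

section InvariantRings

variable {A R G : Type*} [CommRing A] [CommRing R] [Algebra A R] [Group G] [MulSemiringAction G R]
  [SMulCommClass G A R]

theorem smul_mem_reductionClosure_map [IsNoetherianRing R] (I : Ideal A) (g : G) {y : R}
    (hy : y ∈ reductionClosure (I.map (algebraMap A R))) :
    g • y ∈ reductionClosure (I.map (algebraMap A R)) := by
  have hcomp : (MulSemiringAction.toRingHom G R g).comp (algebraMap A R) = algebraMap A R :=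
    RingHom.ext fun x ↦ smul_algebraMap g x
  exact map_reductionClosure_le (f := MulSemiringAction.toRingHom G R g)
    (by rw [Ideal.map_map, hcomp]) (Ideal.mem_map_of_mem _ hy)

variable (G)

theorem IsWeaklyArfRing.of_isInvariant [Algebra.IsInvariant A R G] [FaithfulSMul A R]
    (hR : IsWeaklyArfRing R)
    (hnzd : nonZeroDivisors A ≤ (nonZeroDivisors R).comap (algebraMap A R)) :
    IsWeaklyArfRing A := by
  intro x y z hx hy hz
  have hint (w : A) (hw : IsIntegral A (IsLocalization.mk' (FractionRing A) w
      (⟨x, hx⟩ : nonZeroDivisors A))) :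
      IsIntegral R (IsLocalization.mk' (FractionRing R) (algebraMap A R w)
        (⟨algebraMap A R x, hnzd hx⟩ : nonZeroDivisors R)) := by
    have h := hw.map_of_comp_eq (algebraMap A R)
      (IsLocalization.map (FractionRing R) (algebraMap A R) hnzd)
      (IsLocalization.map_comp hnzd).symm
    rwa [IsLocalization.map_mk'] at h
  obtain ⟨r, hr⟩ := Ideal.mem_span_singleton.mp (hR _ _ _ (hnzd hx) (hint y hy) (hint z hz))
  have hrG (g : G) : g • r = r := by
    have hg : g • (algebraMap A R x * r) = algebraMap A R x * r := by
      rw [← hr, ← map_mul, smul_algebraMap]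
    rwa [smul_mul', smul_algebraMap, mul_cancel_left_mem_nonZeroDivisors (hnzd hx)] at hg
  obtain ⟨c, rfl⟩ := Algebra.IsInvariant.isInvariant (A := A) r hrG
  rw [← map_mul, ← map_mul] at hr
  exact Ideal.mem_span_singleton.mpr ⟨c, FaithfulSMul.algebraMap_injective A R hr⟩

theorem arf_invariantSubring_general (A R G : Type*) [CommRing A] [CommRing R] [Algebra A R]
    [FaithfulSMul A R] [Group G] [Finite G] [MulSemiringAction G R] [SMulCommClass G A R]
    [Algebra.IsInvariant A R G] [IsNoetherianRing R] [Finite (MaximalSpectrum R)]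
    (hass : associatedPrimes R R ⊆ minimalPrimes R) (hR : IsArfRing R) : IsArfRing A := by
  have hnzd := nonZeroDivisors_le_comap_algebraMap (A := A) G hass
  refine ⟨fun I hI ⟨x, hxI, hx⟩ ↦ ?_, hR.2.of_isInvariant G hnzd⟩
  have hred := isReduction_reductionClosure (I.map (algebraMap A R))
  obtain ⟨a, haJ, ha, hJ⟩ := hR.exists_sq_eq (isIntegrallyClosedIdeal_reductionClosure _)
    ⟨algebraMap A R x, hred.le (Ideal.mem_map_of_mem _ hxI), hnzd hx⟩
  let _ := fractionRingMulSemiringAction G R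
  have := smulDistribClass_fractionRing G R
  obtain ⟨f, hf, hI2⟩ := exists_sq_eq_of_isReduction_map (K := FractionRing R) (G := G) hI hred
    (fun g _ ↦ smul_mem_reductionClosure_map I g) haJ ha hJ
  exact ⟨1, f, hf, by rwa [pow_one]⟩

end InvariantRings

section InvariantSubring

variable {R : Type*} [CommRing R] (G : Subgroup (R ≃+* R))

instance : Algebra.IsInvariant (invariantSubring G) R G :=
  ⟨fun b hb ↦ ⟨⟨b, fun σ hσ ↦ hb ⟨σ, hσ⟩⟩, rfl⟩⟩

instance : SMulCommClass G (invariantSubring G) R :=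
  ⟨fun σ a r ↦ by
    change (σ : R ≃+* R) (a * r) = a * (σ : R ≃+* R) r
    rw [map_mul, a.2 σ σ.2]⟩

end InvariantSubring

/-- Let `R` be a Noetherian semi-local Arf ring whose localizations at maximal ideals
are one-dimensional Cohen–Macaulay local rings.  Then for every finite subgroup `G` of
the ring automorphisms of `R` whose order is invertible in `R`, the invariant subring
`R^G` is an Arf ring. -/
theorem arf_invariantSubring (R : Type*) [CommRing R] [IsNoetherianRing R]
    (hsemi : {M : Ideal R | M.IsMaximal}.Finite)
    (hCM : ∀ (M : Ideal R) [M.IsMaximal],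
      ringKrullDim (Localization.AtPrime M) = 1 ∧
        RingDepthGE (Localization.AtPrime M) 1)
    (hArf : IsArfRing R)
    (G : Subgroup (R ≃+* R)) [Finite G] (hord : IsUnit ((Nat.card G : R))) :
    IsArfRing (invariantSubring G) := by
  have : Finite (MaximalSpectrum R) := finite_maximalSpectrum_iff.mpr hsemi
  have : Ring.KrullDimLE 1 R := krullDimLE_one_of_localization fun M _ ↦ (hCM M).1.le
  exact arf_invariantSubring_general (invariantSubring G) R G
    (associatedPrimes_subset_minimalPrimes fun M _ ↦ (hCM M).2) hArf
end
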